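/- arXiv:2309.03985 — 2 statements merged into one kernel-verified Lean document; each statement's English description precedes it below -/
import Mathlib

section
/- Let Γ be a countable abelian group, and let θ and σ be probability measures on Γ with finite Shannon entropy. Then for every k ≥ 1, H(θ^{*k} * σ) − H(σ) ≤ k·(H(θ * σ) − H(σ)), where θ^{*k} denotes the k-fold convolution of θ with itself. -/
/-- Shannon entropy (base 2) of a discrete probability measure given by a mass function. -/
noncomputable def shEnt {Γ : Type*} (θ : Γ → ℝ) : ℝ :=
  ∑' x, -(θ x * Real.logb 2 (θ x))

/-- Convolution of mass functions on a countable abelian group. -/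
noncomputable def convMass {Γ : Type*} [AddCommGroup Γ] (θ σ : Γ → ℝ) : Γ → ℝ :=
  fun x => ∑' y, θ y * σ (x - y)

/-- The `k`-fold self-convolution of a mass function (`k = 0` gives the Dirac mass at `0`). -/
noncomputable def convPow {Γ : Type*} [AddCommGroup Γ] [DecidableEq Γ] (θ : Γ → ℝ) :
    ℕ → Γ → ℝ
  | 0 => fun x => if x = 0 then 1 else 0
  | k + 1 => convMass θ (convPow θ k)

namespace KV
open scoped ENNReal

/-- Convolution of extended nonnegative mass functions. -/
noncomputable def cv {Γ : Type*} [AddCommGroup Γ] (f g : Γ → ℝ≥0∞) : Γ → ℝ≥0∞ :=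
  fun x => ∑' y, f y * g (x - y)

/-- Information content (natural log). -/
noncomputable def L (t : ℝ≥0∞) : ℝ≥0∞ := ENNReal.ofReal (-Real.log t.toReal)

/-- Entropy (natural log) with values in the extended nonnegative reals. -/
noncomputable def h {Γ : Type*} (f : Γ → ℝ≥0∞) : ℝ≥0∞ := ∑' x, f x * L (f x)

variable {Γ : Type*} [AddCommGroup Γ]

theorem push (f g F : Γ → ℝ≥0∞) :
    ∑' x, ∑' z, f x * g z * F (x + z) = ∑' s, cv f g s * F s := by
  simp only [cv, ← ENNReal.tsum_mul_right]
  rw [ENNReal.tsum_comm (f := fun s y => f y * g (s - y) * F s)]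
  refine tsum_congr fun x => ?_
  rw [← (Equiv.addLeft x).tsum_eq (fun s => f x * g (s - x) * F s)]
  refine tsum_congr fun z => ?_
  simp

theorem push' (f g F : Γ → ℝ≥0∞) :
    ∑' x, f x * ∑' z, g z * F (x + z) = ∑' s, cv f g s * F s := by
  rw [← push]
  refine tsum_congr fun x => ?_
  rw [← ENNReal.tsum_mul_left]
  exact tsum_congr fun z => (mul_assoc _ _ _).symm

theorem cv_sum {f g : Γ → ℝ≥0∞} (hf : ∑' x, f x = 1) (hg : ∑' x, g x = 1) :
    ∑' x, cv f g x = 1 := by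
  have := push' f g (fun _ => 1)
  simpa [hf, hg] using this.symm

theorem cv_comm (f g : Γ → ℝ≥0∞) : cv f g = cv g f := by
  funext x
  unfold cv
  rw [← (Equiv.subLeft x).tsum_eq]
  refine tsum_congr fun y => ?_
  simp [mul_comm]

theorem cv_assoc (f g k : Γ → ℝ≥0∞) : cv (cv f g) k = cv f (cv g k) := by
  funext t
  have := push' f g (fun s => k (t - s))
  simp only [cv] at this ⊢
  rw [← this]
  refine tsum_congr fun x => ?_
  simp [sub_sub]

theorem le_one {f : Γ → ℝ≥0∞} (hf : ∑' x, f x = 1) (x : Γ) : f x ≤ 1 :=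
  hf ▸ ENNReal.le_tsum x

theorem le_cv (f g : Γ → ℝ≥0∞) (x z : Γ) : f x * g z ≤ cv f g (x + z) := by
  have := ENNReal.le_tsum (f := fun y => f y * g (x + z - y)) x
  simpa [cv] using this

theorem L_le {a b c : ℝ≥0∞} (ha : a ≤ 1) (hb : b ≤ 1) (hc : c ≤ 1) (habc : a * b ≤ c) :
    a * b * L c ≤ a * b * (L a + L b) := by
  rcases eq_or_ne a 0 with rfl | ha0
  · simp
  rcases eq_or_ne b 0 with rfl | hb0
  · simp
  have ha' : a ≠ ⊤ := (ha.trans_lt ENNReal.one_lt_top).ne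
  have hb' : b ≠ ⊤ := (hb.trans_lt ENNReal.one_lt_top).ne
  have hc' : c ≠ ⊤ := (hc.trans_lt ENNReal.one_lt_top).ne
  gcongr
  unfold L
  have h1 : a.toReal * b.toReal ≤ c.toReal := by
    rw [← ENNReal.toReal_mul]; exact ENNReal.toReal_mono hc' habc
  have pa := ENNReal.toReal_pos ha0 ha'
  have pb := ENNReal.toReal_pos hb0 hb'
  have h2 := Real.log_le_log (mul_pos pa pb) h1
  rw [Real.log_mul pa.ne' pb.ne'] at h2
  refine (ENNReal.ofReal_le_ofReal ?_).trans ENNReal.ofReal_add_le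
  linarith

theorem h_cv_le {f g : Γ → ℝ≥0∞} (hf : ∑' x, f x = 1) (hg : ∑' x, g x = 1) :
    h (cv f g) ≤ h f + h g := by
  have h1 := push f g (fun s => L (cv f g s))
  unfold h
  rw [← h1]
  calc _ ≤ ∑' x, ∑' z, f x * g z * (L (f x) + L (g z)) :=
        ENNReal.tsum_le_tsum fun x => ENNReal.tsum_le_tsum fun z =>
          L_le (le_one hf x) (le_one hg z) (le_one (cv_sum hf hg) _) (le_cv f g x z)
    _ = ∑' x, ∑' z, (f x * L (f x) * g z + f x * (g z * L (g z))) := by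
        refine tsum_congr fun x => tsum_congr fun z => ?_
        ring
    _ = _ := by
        simp only [ENNReal.tsum_add, ENNReal.tsum_mul_left, ENNReal.tsum_mul_right, hf, hg,
          mul_one, one_mul]

theorem gibbs {a b c d : ℝ≥0∞} (ha : a ≤ 1) (hb : b ≤ 1) (hc : c ≤ 1) (hd : d ≤ 1)
    (ha0 : a ≠ 0) (hb0 : b ≠ 0) (hc0 : c ≠ 0) (hd0 : d ≠ 0) :
    a * (L d + L a) + a ≤ a * (L b + L c) + b * c / d := by
  have ha' : a ≠ ⊤ := (ha.trans_lt ENNReal.one_lt_top).ne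
  have hb' : b ≠ ⊤ := (hb.trans_lt ENNReal.one_lt_top).ne
  have hc' : c ≠ ⊤ := (hc.trans_lt ENNReal.one_lt_top).ne
  have hd' : d ≠ ⊤ := (hd.trans_lt ENNReal.one_lt_top).ne
  lift a to NNReal using ha'
  lift b to NNReal using hb'
  lift c to NNReal using hc'
  lift d to NNReal using hd'
  simp only [ne_eq, ENNReal.coe_eq_zero, ENNReal.coe_le_one_iff] at *
  have pa : (0:ℝ) < a := by positivity
  have pb : (0:ℝ) < b := by positivity
  have pc : (0:ℝ) < c := by positivity
  have pd : (0:ℝ) < d := by positivity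
  have la : Real.log a ≤ 0 := Real.log_nonpos a.2 (by exact_mod_cast ha)
  have lb : Real.log b ≤ 0 := Real.log_nonpos b.2 (by exact_mod_cast hb)
  have lc : Real.log c ≤ 0 := Real.log_nonpos c.2 (by exact_mod_cast hc)
  have ld : Real.log d ≤ 0 := Real.log_nonpos d.2 (by exact_mod_cast hd)
  unfold L
  simp only [ENNReal.coe_toReal]
  rw [← ENNReal.ofReal_add (by linarith) (by linarith),
    ← ENNReal.ofReal_add (by linarith) (by linarith)]
  simp only [← ENNReal.ofReal_coe_nnreal]
  rw [← ENNReal.ofReal_mul pa.le, ← ENNReal.ofReal_mul pa.le, ← ENNReal.ofReal_mul pb.le,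
    ← ENNReal.ofReal_div_of_pos pd, ← ENNReal.ofReal_add, ← ENNReal.ofReal_add]
  · apply ENNReal.ofReal_le_ofReal
    have key := Real.log_le_sub_one_of_pos (x := (b * c / (d * a) : ℝ)) (by positivity)
    rw [Real.log_div (by positivity) (by positivity), Real.log_mul pb.ne' pc.ne',
      Real.log_mul pd.ne' pa.ne'] at key
    have k2 := mul_le_mul_of_nonneg_left key pa.le
    have k3 : (a:ℝ) * (b * c / (d * a) - 1) = b * c / d - a := by field_simp
    rw [k3] at k2
    linarith
  · exact mul_nonneg pa.le (by linarith)
  · positivity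
  · exact mul_nonneg pa.le (by linarith)
  · exact pa.le

theorem submod {f g k : Γ → ℝ≥0∞} (hf : ∑' x, f x = 1) (hg : ∑' x, g x = 1)
    (hk : ∑' x, k x = 1) :
    h (cv f (cv g k)) + h k ≤ h (cv g k) + h (cv f k) := by
  set b := cv g k with hb
  set c := cv f k with hc
  set d := cv f b with hd
  have sb : ∑' x, b x = 1 := cv_sum hg hk
  have sc : ∑' x, c x = 1 := cv_sum hf hk
  have sd : ∑' x, d x = 1 := cv_sum hf sb
  have hd2 : d = cv g c := by
    rw [hd, hb, hc, ← cv_assoc, cv_comm f g, cv_assoc]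
  have pt : ∀ x y z, f x * (g y * (k z * (L (d (x + (y + z))) + L (k z)) + k z)) ≤
      f x * (g y * (k z * (L (b (y + z)) + L (c (x + z))) +
        b (y + z) * c (x + z) / d (x + (y + z)))) := by
    intro x y z
    rcases eq_or_ne (f x) 0 with hx | hx
    · simp [hx]
    rcases eq_or_ne (g y) 0 with hy | hy
    · simp [hy]
    rcases eq_or_ne (k z) 0 with hz | hz
    · simp [hz]
    have b0 : b (y + z) ≠ 0 := fun e => by
      have := le_cv g k y z
      rw [← hb, e] at this
      simp [hy, hz] at this
    have c0 : c (x + z) ≠ 0 := fun e => by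
      have := le_cv f k x z
      rw [← hc, e] at this
      simp [hx, hz] at this
    have d0 : d (x + (y + z)) ≠ 0 := fun e => by
      have := le_cv f b x (y + z)
      rw [← hd, e] at this
      simp [hx, b0] at this
    gcongr f x * (g y * ?_)
    exact gibbs (le_one hk _) (le_one sb _) (le_one sc _) (le_one sd _) hz b0 c0 d0
  have tot := ENNReal.tsum_le_tsum fun x => ENNReal.tsum_le_tsum fun y =>
    ENNReal.tsum_le_tsum fun z => pt x y z
  have e1 : ∑' x, ∑' y, ∑' z, f x * (g y * (k z * L (d (x + (y + z))))) = h d := by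
    simp only [ENNReal.tsum_mul_left]
    unfold h
    rw [hd, ← push' f b (fun s => L (cv f b s))]
    refine tsum_congr fun x => ?_
    rw [hb, ← push' g k (fun s => L (cv f (cv g k) (x + s)))]
  have e2 : ∑' x, ∑' y, ∑' z, f x * (g y * (k z * L (k z))) = h k := by
    simp only [ENNReal.tsum_mul_left, ENNReal.tsum_mul_right, hf, hg, one_mul, h]
  have e3 : ∑' x, ∑' y, ∑' z, f x * (g y * k z) = 1 := by
    simp only [ENNReal.tsum_mul_left, ENNReal.tsum_mul_right, hf, hg, hk, one_mul]
  have e4 : ∑' x, ∑' y, ∑' z, f x * (g y * (k z * L (b (y + z)))) = h b := by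
    simp only [ENNReal.tsum_mul_left, ENNReal.tsum_mul_right, hf, one_mul]
    exact push' g k (fun s => L (b s))
  have e5 : ∑' x, ∑' y, ∑' z, f x * (g y * (k z * L (c (x + z)))) = h c := by
    simp only [ENNReal.tsum_mul_left, ENNReal.tsum_mul_right, hg, one_mul]
    exact push' f k (fun s => L (c s))
  have e6 : ∑' x, ∑' y, ∑' z, f x * (g y * (b (y + z) * c (x + z) / d (x + (y + z)))) ≤ 1 := by
    calc _ = ∑' x, f x * ∑' y, ∑' z, g y * (b (y + z) * c (x + z) / d (x + (y + z))) := by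
          simp only [ENNReal.tsum_mul_left]
      _ ≤ ∑' x, f x * 1 := by
          refine ENNReal.tsum_le_tsum fun x => ?_
          gcongr
          calc _ = ∑' y, ∑' u, g y * (b u * c (x + u - y) / d (x + u)) := by
                refine tsum_congr fun y => ?_
                rw [← (Equiv.addLeft y).tsum_eq
                  (fun u => g y * (b u * c (x + u - y) / d (x + u)))]
                refine tsum_congr fun z => ?_
                have : x + (y + z) - y = x + z := by abel
                simp [this]
            _ = ∑' u, ∑' y, g y * c (x + u - y) * (b u * (d (x + u))⁻¹) := by
                rw [ENNReal.tsum_comm]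
                refine tsum_congr fun u => tsum_congr fun y => ?_
                rw [div_eq_mul_inv]
                ring
            _ = ∑' u, d (x + u) * (b u * (d (x + u))⁻¹) := by
                refine tsum_congr fun u => ?_
                rw [ENNReal.tsum_mul_right]
                congr 1
                rw [hd2]
                rfl
            _ ≤ ∑' u, b u := by
                refine ENNReal.tsum_le_tsum fun u => ?_
                rw [mul_left_comm]
                exact mul_le_of_le_one_right' (ENNReal.mul_inv_le_one _)
            _ = 1 := sb
      _ = 1 := by simp [hf]
  simp only [mul_add, ENNReal.tsum_add, e1, e2, e3, e4, e5] at tot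
  exact (ENNReal.add_le_add_iff_right ENNReal.one_ne_top).1
    (tot.trans (by gcongr))

theorem conv_toReal {f g : Γ → ℝ≥0∞} (hf : ∑' x, f x = 1) (hg : ∑' x, g x = 1) :
    convMass (fun x => (f x).toReal) (fun x => (g x).toReal) = fun x => (cv f g x).toReal := by
  funext x
  unfold convMass cv
  rw [ENNReal.tsum_toReal_eq]
  · simp
  · intro y
    exact ENNReal.mul_ne_top ((le_one hf _).trans_lt ENNReal.one_lt_top).ne
      ((le_one hg _).trans_lt ENNReal.one_lt_top).ne

theorem term_toReal {f : Γ → ℝ≥0∞} (hf : ∑' x, f x = 1) (x : Γ) :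
    (f x * L (f x)).toReal = Real.log 2 * -((f x).toReal * Real.logb 2 (f x).toReal) := by
  have h1 : (f x).toReal ≤ 1 := by
    simpa using ENNReal.toReal_mono ENNReal.one_ne_top (le_one hf x)
  have h2 : Real.log (f x).toReal ≤ 0 := Real.log_nonpos ENNReal.toReal_nonneg h1
  have h3 : Real.log 2 ≠ 0 := (Real.log_pos one_lt_two).ne'
  unfold L Real.logb
  rw [ENNReal.toReal_mul, ENNReal.toReal_ofReal (by linarith)]
  field_simp

theorem term_ne_top {f : Γ → ℝ≥0∞} (hf : ∑' x, f x = 1) (x : Γ) : f x * L (f x) ≠ ⊤ :=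
  ENNReal.mul_ne_top ((le_one hf _).trans_lt ENNReal.one_lt_top).ne ENNReal.ofReal_ne_top

theorem h_toReal {f : Γ → ℝ≥0∞} (hf : ∑' x, f x = 1) :
    (h f).toReal = Real.log 2 * shEnt (fun x => (f x).toReal) := by
  unfold h shEnt
  rw [ENNReal.tsum_toReal_eq (term_ne_top hf), ← tsum_mul_left]
  exact tsum_congr (term_toReal hf)

theorem h_ne_top {f : Γ → ℝ≥0∞} (hf : ∑' x, f x = 1)
    (hs : Summable fun x => -((f x).toReal * Real.logb 2 (f x).toReal)) : h f ≠ ⊤ := by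
  have h1 : Summable fun x => (f x * L (f x)).toReal := by
    simp only [term_toReal hf]
    exact hs.mul_left _
  unfold h
  have h2 : ∀ x, f x * L (f x) = ENNReal.ofReal (f x * L (f x)).toReal := fun x =>
    (ENNReal.ofReal_toReal (term_ne_top hf x)).symm
  rw [tsum_congr h2, ← ENNReal.ofReal_tsum_of_nonneg (fun _ => ENNReal.toReal_nonneg) h1]
  exact ENNReal.ofReal_ne_top

/-- Iterated convolution. -/
noncomputable def pw [DecidableEq Γ] (f : Γ → ℝ≥0∞) : ℕ → Γ → ℝ≥0∞
  | 0 => fun x => if x = 0 then 1 else 0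
  | k + 1 => cv f (pw f k)

theorem pw_sum [DecidableEq Γ] {f : Γ → ℝ≥0∞} (hf : ∑' x, f x = 1) (k : ℕ) :
    ∑' x, pw f k x = 1 := by
  induction k with
  | zero => simp [pw]
  | succ k ih => exact cv_sum hf ih

theorem pw_toReal [DecidableEq Γ] {f : Γ → ℝ≥0∞} (hf : ∑' x, f x = 1) (k : ℕ) :
    convPow (fun x => (f x).toReal) k = fun x => (pw f k x).toReal := by
  induction k with
  | zero =>
    funext x
    simp only [convPow, pw]
    split_ifs <;> simp
  | succ k ih =>
    simp only [convPow, ih]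
    exact conv_toReal hf (pw_sum hf k)

theorem main [DecidableEq Γ] {f g : Γ → ℝ≥0∞} (hf : ∑' x, f x = 1) (hg : ∑' x, g x = 1)
    (ef : h f ≠ ⊤) (eg : h g ≠ ⊤) (k : ℕ) :
    h (cv (pw f k) g) ≠ ⊤ ∧
      (h (cv (pw f k) g)).toReal - (h g).toReal ≤
        k * ((h (cv f g)).toReal - (h g).toReal) := by
  have ec : h (cv f g) ≠ ⊤ :=
    ((h_cv_le hf hg).trans_lt (ENNReal.add_lt_top.2 ⟨ef.lt_top, eg.lt_top⟩)).ne
  induction k with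
  | zero =>
    have : cv (pw f 0) g = g := by
      funext x
      simp [cv, pw]
    simp [this, eg]
  | succ k ih =>
    obtain ⟨i1, i2⟩ := ih
    have sp := pw_sum hf k
    have e : cv (pw f (k + 1)) g = cv f (cv (pw f k) g) := cv_assoc _ _ _
    rw [e]
    have t : h (cv f (cv (pw f k) g)) ≠ ⊤ :=
      ((h_cv_le hf (cv_sum sp hg)).trans_lt (ENNReal.add_lt_top.2 ⟨ef.lt_top, i1.lt_top⟩)).ne
    refine ⟨t, ?_⟩
    have s := ENNReal.toReal_mono (ENNReal.add_ne_top.2 ⟨i1, ec⟩) (submod hf sp hg)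
    rw [ENNReal.toReal_add t eg, ENNReal.toReal_add i1 ec] at s
    push_cast
    linarith

end KV

/-- The Kaimanovich–Vershik lemma: for probability measures `θ, σ` with finite Shannon
entropy on a countable abelian group, `H(θ^{*k} * σ) − H(σ) ≤ k (H(θ * σ) − H(σ))`. -/
theorem stmt2 {Γ : Type*} [AddCommGroup Γ] [Countable Γ] [DecidableEq Γ]
    (θ σ : Γ → ℝ)
    (hθ0 : ∀ x, 0 ≤ θ x) (hσ0 : ∀ x, 0 ≤ σ x)
    (hθ1 : HasSum θ 1) (hσ1 : HasSum σ 1)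
    (hθent : Summable fun x => -(θ x * Real.logb 2 (θ x)))
    (hσent : Summable fun x => -(σ x * Real.logb 2 (σ x))) :
    ∀ k : ℕ, 1 ≤ k →
      shEnt (convMass (convPow θ k) σ) - shEnt σ ≤
        (k : ℝ) * (shEnt (convMass θ σ) - shEnt σ) := by
  intro k _
  have lift : ∀ θ : Γ → ℝ, (∀ x, 0 ≤ θ x) → HasSum θ 1 →
      ∃ f : Γ → ENNReal, ∑' x, f x = 1 ∧ θ = fun x => (f x).toReal := by
    intro θ h0 h1
    refine ⟨fun x => ENNReal.ofReal (θ x), ?_,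
      funext fun x => (ENNReal.toReal_ofReal (h0 x)).symm⟩
    rw [← ENNReal.ofReal_tsum_of_nonneg h0 h1.summable, h1.tsum_eq, ENNReal.ofReal_one]
  obtain ⟨f, hf, rfl⟩ := lift θ hθ0 hθ1
  obtain ⟨g, hg, rfl⟩ := lift σ hσ0 hσ1
  have m := (KV.main hf hg (KV.h_ne_top hf hθent) (KV.h_ne_top hg hσent) k).2
  have sp := KV.pw_sum hf k
  rw [KV.h_toReal (KV.cv_sum sp hg), KV.h_toReal (KV.cv_sum hf hg), KV.h_toReal hg] at m
  rw [KV.pw_toReal hf, KV.conv_toReal sp hg, KV.conv_toReal hf hg]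
  have l2 : 0 < Real.log 2 := Real.log_pos one_lt_two
  refine le_of_mul_le_mul_left ?_ l2
  linarith
end

section
/- Let Γ_n ⊂ ℝ^d be the subgroup {(l₁/2^{m₁},…,l_d/2^{m_d}) : l₁,…,l_d ∈ ℤ} where m_j = ⌊χ_j n⌋ for fixed positive reals χ₁,…,χ_d, and let ξ : ℝ^d → Γ_n map each point to the unique element of Γ_n lying in its cell of the partition 𝓔_n. Then for compactly supported Borel probability measures θ, σ on ℝ^d and every k ≥ 1, H(θ^{*k} * σ, 𝓔_n) − H(σ, 𝓔_n) ≤ k·(H(θ*σ, 𝓔_n) − H(σ, 𝓔_n)) + O(k), where the implicit constant depends only on d and χ₁,…,χ_d. -/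
open MeasureTheory

/-- The cell of the level-`n` non-conformal partition `𝓔_n` of `ℝ^d` indexed by
`k : Fin d → ℤ`: a product of dyadic intervals of levels `⌊χ_j n⌋`. -/
noncomputable def Ecell (d : ℕ) (χ : Fin d → ℝ) (n : ℕ) (k : Fin d → ℤ) :
    Set (Fin d → ℝ) :=
  {x | ∀ j, (k j : ℝ) / 2 ^ ⌊χ j * n⌋ ≤ x j ∧ x j < ((k j : ℝ) + 1) / 2 ^ ⌊χ j * n⌋}

/-- Entropy (base 2) of a measure on `ℝ^d` with respect to `𝓔_n`. -/
noncomputable def entE (d : ℕ) (χ : Fin d → ℝ) (n : ℕ) (θ : Measure (Fin d → ℝ)) : ℝ :=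
  ∑' k : Fin d → ℤ,
    -((θ (Ecell d χ n k)).toReal * Real.logb 2 (θ (Ecell d χ n k)).toReal)

/-- Convolution of two measures on `ℝ^d`. -/
noncomputable def mconv {d : ℕ} (θ σ : Measure (Fin d → ℝ)) : Measure (Fin d → ℝ) :=
  Measure.map (fun p : (Fin d → ℝ) × (Fin d → ℝ) => p.1 + p.2) (θ.prod σ)

/-- `k`-fold self-convolution (`k = 0` gives the Dirac mass at `0`). -/
noncomputable def mconvPow {d : ℕ} (θ : Measure (Fin d → ℝ)) : ℕ → Measure (Fin d → ℝ)
  | 0 => Measure.dirac 0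
  | k + 1 => mconv (mconvPow θ k) θ

open ProbabilityTheory
set_option linter.unusedSectionVars false
section KV
variable {Ω : Type*} [MeasurableSpace Ω] {P : Measure Ω} [IsProbabilityMeasure P]
  {S : Type*} [Countable S] [MeasurableSpace S] [MeasurableSingletonClass S]

theorem sum_int {F : Ω → S} (hF : Measurable F) {A : Finset S} (hA : ∀ᵐ ω ∂P, F ω ∈ A) (u : S → ℝ) :
    Integrable (fun ω => u (F ω)) P ∧
      ∫ ω, u (F ω) ∂P = ∑ s ∈ A, P.real (F ⁻¹' {s}) * u s := by
  classical
  have hm : ∀ s, MeasurableSet (F ⁻¹' {s}) := fun s => hF (measurableSet_singleton s)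
  have he : (fun ω => u (F ω)) =ᵐ[P]
      fun ω => ∑ s ∈ A, (F ⁻¹' {s}).indicator (fun _ => u s) ω := by
    filter_upwards [hA] with ω hω
    rw [Finset.sum_eq_single_of_mem _ hω]
    · simp
    · intro b _ hb
      simp [Ne.symm hb]
  have hi : ∀ s ∈ A, Integrable ((F ⁻¹' {s}).indicator (fun _ => u s)) P :=
    fun s _ => (integrable_const _).indicator (hm s)
  refine ⟨(integrable_finsetSum A hi).congr he.symm, ?_⟩
  rw [integral_congr_ae he, integral_finsetSum A hi]
  refine Finset.sum_congr rfl fun s _ => ?_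
  rw [integral_indicator_const _ (hm s), smul_eq_mul]

theorem law_pos (f : Ω → S) : ∀ᵐ ω ∂P, 0 < P.real (f ⁻¹' {f ω}) := by
  have : ∀ s, ∀ᵐ ω ∂P, P.real (f ⁻¹' {s}) = 0 → f ω ≠ s := by
    intro s
    by_cases h : P.real (f ⁻¹' {s}) = 0
    · have h' : P (f ⁻¹' {s}) = 0 := (measureReal_eq_zero_iff).1 h
      filter_upwards [measure_eq_zero_iff_ae_notMem.1 h'] with ω hω _ h2
      exact hω h2
    · exact Filter.Eventually.of_forall fun ω h' => absurd h' h
  filter_upwards [ae_all_iff.2 this] with ω hω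
  exact lt_of_le_of_ne measureReal_nonneg fun h => hω (f ω) h.symm rfl

theorem law_sum {f : Ω → S} (hf : Measurable f) (B : Finset S) :
    ∑ s ∈ B, P.real (f ⁻¹' {s}) ≤ 1 := by
  rw [sum_measureReal_preimage_singleton B (fun y _ => hf (measurableSet_singleton y))]
  exact measureReal_le_one

/-- Entropy in nats. -/
noncomputable def HH (P : Measure Ω) (f : Ω → S) : ℝ := ∫ ω, -Real.log (P.real (f ⁻¹' {f ω})) ∂P

theorem int_helper {f1 f2 f3 f4 f5 : Ω → ℝ} {c : ℝ} (h1 : Integrable f1 P) (h2 : Integrable f2 P)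
    (h3 : Integrable f3 P) (h4 : Integrable f4 P) (h5 : Integrable f5 P)
    (h : ∀ᵐ ω ∂P, f1 ω + f2 ω ≤ f3 ω + f4 ω + f5 ω + c) :
    ∫ ω, f1 ω ∂P + ∫ ω, f2 ω ∂P ≤ ∫ ω, f3 ω ∂P + ∫ ω, f4 ω ∂P + ∫ ω, f5 ω ∂P + c := by
  have e : ∫ ω, (f1 + f2) ω ∂P ≤ ∫ ω, (f3 + f4 + f5 + (fun _ => c : Ω → ℝ)) ω ∂P :=
    integral_mono_ae (h1.add h2) (((h3.add h4).add h5).add (integrable_const c)) h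
  rw [integral_add' h1 h2, integral_add' ((h3.add h4).add h5) (integrable_const c),
    integral_add' (h3.add h4) h5, integral_add' h3 h4] at e
  simpa using e

theorem HH_shift {G : Type*} [AddCommGroup G] [Countable G] [MeasurableSpace G]
    [MeasurableSingletonClass G] {f g : Ω → G} (hf : Measurable f) (hg : Measurable g)
    {A B E : Finset G} (hA : ∀ᵐ ω ∂P, f ω ∈ A) (hB : ∀ᵐ ω ∂P, g ω ∈ B)
    (hE : ∀ ω, f ω - g ω ∈ E) : HH P f ≤ HH P g + Real.log E.card := by
  classical
  obtain ⟨ω0⟩ : Nonempty Ω := P.nonempty_of_neZero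
  have hN : (0 : ℝ) < E.card := by
    exact_mod_cast Finset.card_pos.2 ⟨_, hE ω0⟩
  set pf : G → ℝ := fun s => P.real (f ⁻¹' {s}) with hpf
  set pg : G → ℝ := fun s => P.real (g ⁻¹' {s}) with hpg
  have hpf0 : ∀ s, 0 ≤ pf s := fun s => measureReal_nonneg
  have hpg0 : ∀ s, 0 ≤ pg s := fun s => measureReal_nonneg
  obtain ⟨i1, e1⟩ := sum_int (P := P) hf hA (fun s => -Real.log (pf s))
  obtain ⟨i2, e2⟩ := sum_int (P := P) hg hB (fun s => -Real.log (pg s))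
  obtain ⟨i3, e3⟩ := sum_int (P := P) hf hA (fun s => (∑ e ∈ E, pg (s - e)) / (E.card * pf s))
  have key := int_helper (c := Real.log E.card - 1) i1 (integrable_zero Ω ℝ P) i2
    (integrable_zero Ω ℝ P) i3 (by
    filter_upwards [law_pos (P := P) f, law_pos (P := P) g] with ω h1 h2
    change 0 < pf (f ω) at h1
    change 0 < pg (g ω) at h2
    have h3 : pg (g ω) ≤ ∑ e ∈ E, pg (f ω - e) := by
      have := Finset.single_le_sum (f := fun e => pg (f ω - e)) (fun e _ => hpg0 _) (hE ω)
      simpa using this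
    have h4 := Real.log_le_sub_one_of_pos (x := pg (g ω) / (E.card * pf (f ω))) (by positivity)
    rw [Real.log_div h2.ne' (by positivity), Real.log_mul hN.ne' h1.ne'] at h4
    have h5 : pg (g ω) / (E.card * pf (f ω)) ≤ (∑ e ∈ E, pg (f ω - e)) / (E.card * pf (f ω)) := by
      gcongr
    change _ + (0:ℝ) ≤ _ + (0:ℝ) + _ + _
    linarith)
  rw [e3] at key
  have hle : ∑ s ∈ A, P.real (f ⁻¹' {s}) * ((∑ e ∈ E, pg (s - e)) / (E.card * pf s)) ≤ 1 := by
    calc _ ≤ ∑ s ∈ A, (∑ e ∈ E, pg (s - e)) / E.card := by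
          refine Finset.sum_le_sum fun s _ => ?_
          change pf s * _ ≤ _
          rcases (hpf0 s).eq_or_lt with h | h
          · rw [← h, zero_mul]
            exact div_nonneg (Finset.sum_nonneg fun e _ => hpg0 _) hN.le
          · apply le_of_eq
            field_simp
      _ = (∑ e ∈ E, ∑ s ∈ A, pg (s - e)) / E.card := by
          rw [← Finset.sum_div, Finset.sum_comm]
      _ ≤ (∑ e ∈ E, 1) / E.card := by
          gcongr with e he
          have := law_sum (P := P) hg (A.image (fun s => s - e))
          rwa [Finset.sum_image (by intro a _ b _ h; simpa using h)] at this
      _ = 1 := by simp [hN.ne']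
  change HH P f + ∫ _, (0 : ℝ) ∂P ≤ HH P g + ∫ _, (0 : ℝ) ∂P + _ + _ at key
  rw [integral_zero] at key
  linarith

theorem law_add {G : Type*} [AddCommGroup G] [Countable G] [MeasurableSpace G]
    [MeasurableSingletonClass G] {X Y : Ω → G} (hX : Measurable X) (hY : Measurable Y)
    {A : Finset G} (hA : ∀ᵐ ω ∂P, X ω ∈ A) (h : IndepFun X Y P) (v : G) :
    P.real ((fun ω => X ω + Y ω) ⁻¹' {v}) =
      ∑ x ∈ A, P.real (X ⁻¹' {x}) * P.real (Y ⁻¹' {v - x}) := by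
  classical
  have h1 : ∀ x, P.real (X ⁻¹' {x}) * P.real (Y ⁻¹' {v - x}) =
      P.real (X ⁻¹' {x} ∩ Y ⁻¹' {v - x}) := by
    intro x
    rw [measureReal_def, measureReal_def, measureReal_def, ← ENNReal.toReal_mul,
      h.measure_inter_preimage_eq_mul _ _ (measurableSet_singleton _) (measurableSet_singleton _)]
  simp_rw [h1]
  rw [← measureReal_biUnion_finset]
  · apply measureReal_congr
    filter_upwards [hA] with ω hω
    apply propext
    change (X ω + Y ω ∈ ({v} : Set G)) ↔ ω ∈ ⋃ b ∈ A, X ⁻¹' {b} ∩ Y ⁻¹' {v - b}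
    simp only [Set.mem_singleton_iff, Set.mem_iUnion, Set.mem_inter_iff, Set.mem_preimage]
    constructor
    · intro h
      exact ⟨X ω, hω, rfl, by rw [← h]; abel⟩
    · rintro ⟨b, _, h1, h2⟩
      rw [h1, h2]; abel
  · intro a _ b _ hab
    refine Set.disjoint_left.2 fun ω h1 h2 => hab ?_
    exact h1.1.symm.trans h2.1
  · intro b _
    exact (hX (measurableSet_singleton _)).inter (hY (measurableSet_singleton _))

theorem HH_kv {G : Type*} [AddCommGroup G] [Countable G] [MeasurableSpace G]
    [MeasurableSingletonClass G] {X Y Z : Ω → G} (hX : Measurable X) (hY : Measurable Y)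
    (hZ : Measurable Z) {A B C : Finset G} (hA : ∀ᵐ ω ∂P, X ω ∈ A) (hB : ∀ᵐ ω ∂P, Y ω ∈ B)
    (hC : ∀ᵐ ω ∂P, Z ω ∈ C) (hi : IndepFun X (fun ω => (Y ω, Z ω)) P) (hj : IndepFun Y Z P) :
    HH P (fun ω => X ω + (Y ω + Z ω)) + HH P Z ≤
      HH P (fun ω => X ω + Z ω) + HH P (fun ω => Y ω + Z ω) := by
  classical
  have hdisc : DiscreteMeasurableSpace G := inferInstance
  have hadd : Measurable (fun p : G × G => p.1 + p.2) := Measurable.of_discrete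
  have hYZ : Measurable fun ω => Y ω + Z ω := hadd.comp (hY.prodMk hZ)
  have hXZ : Measurable fun ω => X ω + Z ω := hadd.comp (hX.prodMk hZ)
  have hT : Measurable fun ω => X ω + (Y ω + Z ω) := hadd.comp (hX.prodMk hYZ)
  have hiZ : IndepFun X Z P := hi.comp measurable_id measurable_snd
  have hiYZ : IndepFun X (fun ω => Y ω + Z ω) P := hi.comp measurable_id hadd
  set p : G → ℝ := fun s => P.real (X ⁻¹' {s}) with hp
  set q : G → ℝ := fun s => P.real (Y ⁻¹' {s}) with hq
  set r : G → ℝ := fun s => P.real (Z ⁻¹' {s}) with hr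
  set a : G → ℝ := fun s => P.real ((fun ω => X ω + Z ω) ⁻¹' {s}) with ha
  set b : G → ℝ := fun s => P.real ((fun ω => Y ω + Z ω) ⁻¹' {s}) with hb
  set t : G → ℝ := fun s => P.real ((fun ω => X ω + (Y ω + Z ω)) ⁻¹' {s}) with ht
  have p0 : ∀ s, 0 ≤ p s := fun s => measureReal_nonneg
  have q0 : ∀ s, 0 ≤ q s := fun s => measureReal_nonneg
  have r0 : ∀ s, 0 ≤ r s := fun s => measureReal_nonneg
  have a0 : ∀ s, 0 ≤ a s := fun s => measureReal_nonneg
  have b0 : ∀ s, 0 ≤ b s := fun s => measureReal_nonneg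
  have t0 : ∀ s, 0 ≤ t s := fun s => measureReal_nonneg
  have ea : ∀ v, a v = ∑ x ∈ A, p x * r (v - x) := law_add hX hZ hA hiZ
  have eb : ∀ v, b v = ∑ y ∈ B, q y * r (v - y) := law_add hY hZ hB hj
  have et : ∀ v, t v = ∑ x ∈ A, p x * b (v - x) := law_add hX hYZ hA hiYZ
  have et' : ∀ v, t v = ∑ y ∈ B, q y * a (v - y) := by
    intro v
    rw [et]
    simp_rw [ea, eb, Finset.mul_sum]
    rw [Finset.sum_comm]
    refine Finset.sum_congr rfl fun y _ => Finset.sum_congr rfl fun x _ => ?_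
    rw [sub_right_comm]; ring
  have aT : ∀ᵐ ω ∂P, X ω + (Y ω + Z ω) ∈
      (A ×ˢ (B ×ˢ C)).image (fun s => s.1 + (s.2.1 + s.2.2)) := by
    filter_upwards [hA, hB, hC] with ω h1 h2 h3
    exact Finset.mem_image.2 ⟨(X ω, Y ω, Z ω), by simp [h1, h2, h3], rfl⟩
  have aXZ : ∀ᵐ ω ∂P, X ω + Z ω ∈ (A ×ˢ C).image (fun s => s.1 + s.2) := by
    filter_upwards [hA, hC] with ω h1 h3
    exact Finset.mem_image.2 ⟨(X ω, Z ω), by simp [h1, h3], rfl⟩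
  have aYZ : ∀ᵐ ω ∂P, Y ω + Z ω ∈ (B ×ˢ C).image (fun s => s.1 + s.2) := by
    filter_upwards [hB, hC] with ω h1 h3
    exact Finset.mem_image.2 ⟨(Y ω, Z ω), by simp [h1, h3], rfl⟩
  have aF : ∀ᵐ ω ∂P, (X ω, Y ω, Z ω) ∈ A ×ˢ (B ×ˢ C) := by
    filter_upwards [hA, hB, hC] with ω h1 h2 h3
    simp [h1, h2, h3]
  have i1 := (sum_int (P := P) hT aT (fun s => -Real.log (t s))).1
  have i2 := (sum_int (P := P) hZ hC (fun s => -Real.log (r s))).1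
  have i3 := (sum_int (P := P) hXZ aXZ (fun s => -Real.log (a s))).1
  have i4 := (sum_int (P := P) hYZ aYZ (fun s => -Real.log (b s))).1
  obtain ⟨i5, e5⟩ := sum_int (P := P) (hX.prodMk (hY.prodMk hZ)) aF
    (fun s => a (s.1 + s.2.2) * b (s.2.1 + s.2.2) / (r s.2.2 * t (s.1 + (s.2.1 + s.2.2))))
  have key := int_helper (c := -1) i1 i2 i3 i4 i5 (by
    filter_upwards [law_pos (P := P) (fun ω => X ω + (Y ω + Z ω)), law_pos (P := P) Z,
      law_pos (P := P) (fun ω => X ω + Z ω), law_pos (P := P) (fun ω => Y ω + Z ω)]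
      with ω h1 h2 h3 h4
    change 0 < t (X ω + (Y ω + Z ω)) at h1
    change 0 < r (Z ω) at h2
    change 0 < a (X ω + Z ω) at h3
    change 0 < b (Y ω + Z ω) at h4
    have h := Real.log_le_sub_one_of_pos
      (x := a (X ω + Z ω) * b (Y ω + Z ω) / (r (Z ω) * t (X ω + (Y ω + Z ω)))) (by positivity)
    rw [Real.log_div (by positivity) (by positivity), Real.log_mul h3.ne' h4.ne',
      Real.log_mul h2.ne' h1.ne'] at h
    linarith)
  rw [e5] at key
  have hlaw : ∀ s : G × G × G, P.real ((fun ω => (X ω, Y ω, Z ω)) ⁻¹' {s}) =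
      p s.1 * (q s.2.1 * r s.2.2) := by
    rintro ⟨x, y, z⟩
    have h1 := hi.measure_inter_preimage_eq_mul {x} {(y, z)} (measurableSet_singleton _)
      (measurableSet_singleton _)
    have h2 := hj.measure_inter_preimage_eq_mul {y} {z} (measurableSet_singleton _)
      (measurableSet_singleton _)
    have e1 : (fun ω => (Y ω, Z ω)) ⁻¹' {(y, z)} = Y ⁻¹' {y} ∩ Z ⁻¹' {z} := by
      ext ω; simp
    have e2 : (fun ω => (X ω, Y ω, Z ω)) ⁻¹' {(x, y, z)} =
      X ⁻¹' {x} ∩ (fun ω => (Y ω, Z ω)) ⁻¹' {(y, z)} := by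
      ext ω; simp
    simp only [hp, hq, hr, measureReal_def]
    rw [e2, h1, e1, h2, ENNReal.toReal_mul, ENNReal.toReal_mul]
  have hle : ∑ s ∈ A ×ˢ (B ×ˢ C), P.real ((fun ω => (X ω, Y ω, Z ω)) ⁻¹' {s}) *
      (a (s.1 + s.2.2) * b (s.2.1 + s.2.2) / (r s.2.2 * t (s.1 + (s.2.1 + s.2.2)))) ≤ 1 := by
    set D := (A ×ˢ (B ×ˢ C)).image (fun s => s.1 + (s.2.1 + s.2.2)) with hD
    calc _ ≤ ∑ s ∈ A ×ˢ (B ×ˢ C), p s.1 * q s.2.1 *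
          (a (s.1 + s.2.2) * b (s.2.1 + s.2.2) / t (s.1 + (s.2.1 + s.2.2))) := by
          refine Finset.sum_le_sum fun s _ => ?_
          rw [hlaw]
          have hn : 0 ≤ p s.1 * q s.2.1 *
              (a (s.1 + s.2.2) * b (s.2.1 + s.2.2) / t (s.1 + (s.2.1 + s.2.2))) :=
            mul_nonneg (mul_nonneg (p0 _) (q0 _)) (div_nonneg (mul_nonneg (a0 _) (b0 _)) (t0 _))
          rcases (r0 s.2.2).eq_or_lt with h | h
          · rw [← h]; simpa using hn
          · apply le_of_eq
            rw [mul_comm (r s.2.2) (t _), ← div_div]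
            field_simp
      _ = ∑ x ∈ A, ∑ y ∈ B, ∑ z ∈ C, p x * q y * (a (x + z) * b (y + z) / t (x + (y + z))) := by
          rw [Finset.sum_product]
          refine Finset.sum_congr rfl fun x _ => ?_
          rw [Finset.sum_product]
      _ ≤ ∑ x ∈ A, ∑ y ∈ B, ∑ w ∈ D, p x * q y * (a (w - y) * b (w - x) / t w) := by
          refine Finset.sum_le_sum fun x hx => Finset.sum_le_sum fun y hy => ?_
          have hinj : Set.InjOn (fun z => x + (y + z)) (C : Set G) := by
            intro u _ v _ h; simpa using h
          calc _ = ∑ w ∈ C.image (fun z => x + (y + z)),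
                p x * q y * (a (w - y) * b (w - x) / t w) := by
                rw [Finset.sum_image hinj]
                refine Finset.sum_congr rfl fun z _ => ?_
                rw [show x + (y + z) - y = x + z by abel, show x + (y + z) - x = y + z by abel]
            _ ≤ _ := by
                refine Finset.sum_le_sum_of_subset_of_nonneg ?_ fun w _ _ =>
                  mul_nonneg (mul_nonneg (p0 _) (q0 _))
                    (div_nonneg (mul_nonneg (a0 _) (b0 _)) (t0 _))
                intro w hw
                obtain ⟨z, hz, rfl⟩ := Finset.mem_image.1 hw
                exact Finset.mem_image.2 ⟨(x, y, z), by simp [hx, hy, hz], rfl⟩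
      _ = ∑ w ∈ D, (∑ x ∈ A, p x * b (w - x)) * (∑ y ∈ B, q y * a (w - y)) / t w := by
          simp_rw [Finset.sum_comm (s := B) (t := D)]
          rw [Finset.sum_comm]
          refine Finset.sum_congr rfl fun w _ => ?_
          rw [Finset.sum_mul_sum, Finset.sum_div]
          refine Finset.sum_congr rfl fun x _ => ?_
          rw [Finset.sum_div]
          refine Finset.sum_congr rfl fun y _ => ?_
          ring
      _ = ∑ w ∈ D, t w := by
          refine Finset.sum_congr rfl fun w _ => ?_
          rw [← et, ← et', mul_self_div_self]
      _ ≤ 1 := law_sum hT D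
  change HH P (fun ω => X ω + (Y ω + Z ω)) + HH P Z ≤
      HH P (fun ω => X ω + Z ω) + HH P (fun ω => Y ω + Z ω) + _ + _ at key
  linarith

end KV

/-- The index of the cell containing a point. -/
noncomputable def cellIdx (d : ℕ) (χ : Fin d → ℝ) (n : ℕ) (x : Fin d → ℝ) : Fin d → ℤ :=
  fun j => ⌊x j * (2 : ℝ) ^ ⌊χ j * n⌋⌋

theorem cellIdx_measurable (d : ℕ) (χ : Fin d → ℝ) (n : ℕ) : Measurable (cellIdx d χ n) := by
  unfold cellIdx
  refine measurable_pi_lambda _ fun j => ?_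
  exact Int.measurable_floor.comp ((measurable_pi_apply j).mul_const _)

theorem Ecell_eq (d : ℕ) (χ : Fin d → ℝ) (n : ℕ) (k : Fin d → ℤ) :
    Ecell d χ n k = cellIdx d χ n ⁻¹' {k} := by
  ext x
  simp only [Ecell, cellIdx, Set.mem_ofPred_eq, Set.mem_preimage, Set.mem_singleton_iff, funext_iff,
    Int.floor_eq_iff]
  refine forall_congr' fun j => ?_
  have h : (0 : ℝ) < (2 : ℝ) ^ ⌊χ j * n⌋ := by positivity
  rw [div_le_iff₀ h, lt_div_iff₀ h]

/-- Almost surely bounded random vectors. -/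
def ABdd {Ω : Type*} [MeasurableSpace Ω] (P : Measure Ω) {d : ℕ} (V : Ω → Fin d → ℝ) : Prop :=
  ∃ R : ℝ, ∀ᵐ ω ∂P, ∀ j, |V ω j| ≤ R

theorem ABdd.add {Ω : Type*} [MeasurableSpace Ω] {P : Measure Ω} {d : ℕ} {V W : Ω → Fin d → ℝ}
    (hV : ABdd P V) (hW : ABdd P W) : ABdd P (fun ω => V ω + W ω) := by
  obtain ⟨R, hR⟩ := hV
  obtain ⟨R', hR'⟩ := hW
  refine ⟨R + R', ?_⟩
  filter_upwards [hR, hR'] with ω h1 h2 j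
  exact (abs_add_le _ _).trans (add_le_add (h1 j) (h2 j))

theorem ABdd.fin {Ω : Type*} [MeasurableSpace Ω] {P : Measure Ω} {d : ℕ} {V : Ω → Fin d → ℝ}
    (hV : ABdd P V) (χ : Fin d → ℝ) (n : ℕ) :
    ∃ A : Finset (Fin d → ℤ), ∀ᵐ ω ∂P, cellIdx d χ n (V ω) ∈ A := by
  obtain ⟨R, hR⟩ := hV
  refine ⟨Fintype.piFinset fun j => Finset.Icc ⌊-R * (2 : ℝ) ^ ⌊χ j * n⌋⌋
    ⌊R * (2 : ℝ) ^ ⌊χ j * n⌋⌋, ?_⟩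
  filter_upwards [hR] with ω h
  rw [Fintype.mem_piFinset]
  intro j
  have h' := abs_le.1 (h j)
  rw [Finset.mem_Icc]
  constructor
  · exact Int.floor_le_floor (mul_le_mul_of_nonneg_right h'.1 (by positivity))
  · exact Int.floor_le_floor (mul_le_mul_of_nonneg_right h'.2 (by positivity))

theorem entE_eq {Ω : Type*} [MeasurableSpace Ω] {P : Measure Ω} [IsProbabilityMeasure P] {d : ℕ}
    {V : Ω → Fin d → ℝ} (hm : Measurable V) (hV : ABdd P V) (χ : Fin d → ℝ) (n : ℕ) :
    entE d χ n (P.map V) = HH P (fun ω => cellIdx d χ n (V ω)) / Real.log 2 := by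
  obtain ⟨A, hA⟩ := hV.fin χ n
  have hf : Measurable fun ω => cellIdx d χ n (V ω) := (cellIdx_measurable d χ n).comp hm
  have e : ∀ k, ((P.map V) (Ecell d χ n k)).toReal =
      P.real ((fun ω => cellIdx d χ n (V ω)) ⁻¹' {k}) := by
    intro k
    rw [Ecell_eq, Measure.map_apply hm (cellIdx_measurable d χ n (measurableSet_singleton k))]
    rfl
  unfold entE HH
  simp_rw [e]
  rw [(sum_int hf hA (fun k => -Real.log (P.real ((fun ω => cellIdx d χ n (V ω)) ⁻¹' {k})))).2,
    tsum_eq_sum (s := A), Finset.sum_div]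
  · refine Finset.sum_congr rfl fun k _ => ?_
    rw [Real.logb]; ring
  · intro k hk
    have : P.real ((fun ω => cellIdx d χ n (V ω)) ⁻¹' {k}) = 0 := by
      rw [measureReal_eq_zero_iff]
      refine measure_eq_zero_iff_ae_notMem.2 ?_
      filter_upwards [hA] with ω h h'
      exact hk (h' ▸ h)
    rw [this]; simp

/-- The set of possible discretization errors. -/
noncomputable def errSet (d : ℕ) : Finset (Fin d → ℤ) := Fintype.piFinset fun _ => Finset.Icc (-2) 2

theorem step {d : ℕ} (χ : Fin d → ℝ) (n : ℕ) (μ θ σ : Measure (Fin d → ℝ))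
    [IsProbabilityMeasure μ] [IsProbabilityMeasure θ] [IsProbabilityMeasure σ]
    (hμ : ABdd μ id) (hθ : ABdd θ id) (hσ : ABdd σ id) :
    entE d χ n (mconv (mconv μ θ) σ) + entE d χ n σ ≤
      entE d χ n (mconv μ σ) + entE d χ n (mconv θ σ) +
        3 * Real.log (errSet d).card / Real.log 2 := by
  set P := μ.prod (θ.prod σ) with hP
  set x : (Fin d → ℝ) × (Fin d → ℝ) × (Fin d → ℝ) → Fin d → ℝ := fun ω => ω.1 with hx
  set y : (Fin d → ℝ) × (Fin d → ℝ) × (Fin d → ℝ) → Fin d → ℝ := fun ω => ω.2.1 with hy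
  set z : (Fin d → ℝ) × (Fin d → ℝ) × (Fin d → ℝ) → Fin d → ℝ := fun ω => ω.2.2 with hz
  have mx : Measurable x := measurable_fst
  have my : Measurable y := measurable_fst.comp measurable_snd
  have mz : Measurable z := measurable_snd.comp measurable_snd
  have px : MeasurePreserving x P μ := measurePreserving_fst
  have pyz : MeasurePreserving (fun ω => (y ω, z ω)) P (θ.prod σ) := measurePreserving_snd
  have py : MeasurePreserving y P θ := (measurePreserving_fst (μ := θ) (ν := σ)).comp pyz
  have pz : MeasurePreserving z P σ := (measurePreserving_snd (μ := θ) (ν := σ)).comp pyz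
  have ix : IndepFun x (fun ω => (y ω, z ω)) P := indepFun_prod measurable_id measurable_id
  have iyz : IndepFun y z P := by
    rw [indepFun_iff_map_prod_eq_prod_map_map my.aemeasurable mz.aemeasurable, pyz.map_eq,
      py.map_eq, pz.map_eq]
  have bx : ABdd P x := by
    obtain ⟨R, h⟩ := hμ
    exact ⟨R, px.quasiMeasurePreserving.ae h⟩
  have bY : ABdd P y := by
    obtain ⟨R, h⟩ := hθ
    exact ⟨R, py.quasiMeasurePreserving.ae h⟩
  have bz : ABdd P z := by
    obtain ⟨R, h⟩ := hσ
    exact ⟨R, pz.quasiMeasurePreserving.ae h⟩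
  have ixz : IndepFun x z P := ix.comp measurable_id measurable_snd
  have ixyz : IndepFun x (fun ω => y ω + z ω) P := ix.comp measurable_id
    (measurable_fst.add measurable_snd : Measurable fun p : (Fin d → ℝ) × (Fin d → ℝ) => p.1 + p.2)
  have myz : Measurable (fun ω => y ω + z ω) := my.add mz
  have mxz : Measurable (fun ω => x ω + z ω) := mx.add mz
  have mxyz : Measurable (fun ω => x ω + (y ω + z ω)) := mx.add myz
  have L1 : mconv θ σ = P.map (fun ω => y ω + z ω) := by
    have := iyz.map_add_eq_map_conv_map my mz
    rw [py.map_eq, pz.map_eq] at this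
    exact this.symm
  have L2 : mconv μ σ = P.map (fun ω => x ω + z ω) := by
    have := ixz.map_add_eq_map_conv_map mx mz
    rw [px.map_eq, pz.map_eq] at this
    exact this.symm
  have L3 : mconv (mconv μ θ) σ = P.map (fun ω => x ω + (y ω + z ω)) := by
    have := ixyz.map_add_eq_map_conv_map mx myz
    rw [px.map_eq, ← L1] at this
    refine Eq.trans ?_ this.symm
    exact Measure.conv_assoc μ θ σ
  have L4 : σ = P.map z := pz.map_eq.symm
  rw [L3, L2, L1]
  nth_rewrite 1 [L4]
  rw [entE_eq mxyz (bx.add (bY.add bz)), entE_eq mxz (bx.add bz),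
    entE_eq myz (bY.add bz), entE_eq mz bz]
  have hlog : 0 < Real.log 2 := Real.log_pos (by norm_num)
  rw [← add_div, ← add_div, ← add_div]
  refine div_le_div_of_nonneg_right ?_ hlog.le
  have mc := cellIdx_measurable d χ n
  obtain ⟨A, hA⟩ := bx.fin χ n
  obtain ⟨B, hB⟩ := bY.fin χ n
  obtain ⟨C, hC⟩ := bz.fin χ n
  obtain ⟨A1, hA1⟩ := (bx.add (bY.add bz)).fin χ n
  obtain ⟨A2, hA2⟩ := (bx.add bz).fin χ n
  obtain ⟨A3, hA3⟩ := (bY.add bz).fin χ n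
  have cX := mc.comp mx
  have cY := mc.comp my
  have cZ := mc.comp mz
  have kv := HH_kv (P := P) cX cY cZ hA hB hC
    (ix.comp (φ := cellIdx d χ n) (ψ := Prod.map (cellIdx d χ n) (cellIdx d χ n)) mc
      (mc.prodMap mc)) (iyz.comp mc mc)
  classical
  have aT : ∀ᵐ ω ∂P, cellIdx d χ n (x ω) + (cellIdx d χ n (y ω) + cellIdx d χ n (z ω)) ∈
      (A ×ˢ (B ×ˢ C)).image (fun s => s.1 + (s.2.1 + s.2.2)) := by
    filter_upwards [hA, hB, hC] with ω h1 h2 h3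
    exact Finset.mem_image.2 ⟨(_, _, _), by simpa using ⟨h1, h2, h3⟩, rfl⟩
  have aXZ : ∀ᵐ ω ∂P, cellIdx d χ n (x ω) + cellIdx d χ n (z ω) ∈
      (A ×ˢ C).image (fun s => s.1 + s.2) := by
    filter_upwards [hA, hC] with ω h1 h3
    exact Finset.mem_image.2 ⟨(_, _), by simpa using ⟨h1, h3⟩, rfl⟩
  have aYZ : ∀ᵐ ω ∂P, cellIdx d χ n (y ω) + cellIdx d χ n (z ω) ∈
      (B ×ˢ C).image (fun s => s.1 + s.2) := by
    filter_upwards [hB, hC] with ω h1 h3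
    exact Finset.mem_image.2 ⟨(_, _), by simpa using ⟨h1, h3⟩, rfl⟩
  have fl2 : ∀ u v : Fin d → ℝ,
      cellIdx d χ n u + cellIdx d χ n v - cellIdx d χ n (u + v) ∈ errSet d := by
    intro u v
    rw [errSet, Fintype.mem_piFinset]
    intro j
    simp only [cellIdx, Pi.add_apply, Pi.sub_apply, Finset.mem_Icc, add_mul]
    have h1 := Int.le_floor_add (u j * (2 : ℝ) ^ ⌊χ j * n⌋) (v j * (2 : ℝ) ^ ⌊χ j * n⌋)
    have h2 := Int.le_floor_add_floor (u j * (2 : ℝ) ^ ⌊χ j * n⌋) (v j * (2 : ℝ) ^ ⌊χ j * n⌋)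
    omega
  have fl3 : ∀ u v w : Fin d → ℝ, cellIdx d χ n (u + (v + w)) -
      (cellIdx d χ n u + (cellIdx d χ n v + cellIdx d χ n w)) ∈ errSet d := by
    intro u v w
    rw [errSet, Fintype.mem_piFinset]
    intro j
    simp only [cellIdx, Pi.add_apply, Pi.sub_apply, Finset.mem_Icc, add_mul]
    have h1 := Int.le_floor_add (v j * (2 : ℝ) ^ ⌊χ j * n⌋) (w j * (2 : ℝ) ^ ⌊χ j * n⌋)
    have h2 := Int.le_floor_add_floor (v j * (2 : ℝ) ^ ⌊χ j * n⌋) (w j * (2 : ℝ) ^ ⌊χ j * n⌋)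
    have h3 := Int.le_floor_add (u j * (2 : ℝ) ^ ⌊χ j * n⌋)
      (v j * (2 : ℝ) ^ ⌊χ j * n⌋ + w j * (2 : ℝ) ^ ⌊χ j * n⌋)
    have h4 := Int.le_floor_add_floor (u j * (2 : ℝ) ^ ⌊χ j * n⌋)
      (v j * (2 : ℝ) ^ ⌊χ j * n⌋ + w j * (2 : ℝ) ^ ⌊χ j * n⌋)
    omega
  have s1 := HH_shift (P := P) (mc.comp (mx.add (my.add mz))) (cX.add (cY.add cZ)) hA1 aT
    (fun ω => fl3 (x ω) (y ω) (z ω))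
  have s2 := HH_shift (P := P) (cX.add cZ) (mc.comp (mx.add mz)) aXZ hA2
    (fun ω => fl2 (x ω) (z ω))
  have s3 := HH_shift (P := P) (cY.add cZ) (mc.comp (my.add mz)) aYZ hA3
    (fun ω => fl2 (y ω) (z ω))
  have T : ∀ {a b c e a' b' c' L : ℝ}, a' + e ≤ b' + c' → a ≤ a' + L → b' ≤ b + L → c' ≤ c + L →
      a + e ≤ b + c + 3 * L := by
    intros; linarith
  exact T kv s1 s2 s3

theorem ABdd_of_meas {d : ℕ} {θ : Measure (Fin d → ℝ)} [IsProbabilityMeasure θ]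
    (h : ∃ R : ℝ, θ {x | ∀ j, |x j| ≤ R} = 1) : ABdd θ id := by
  obtain ⟨R, h⟩ := h
  refine ⟨R, ?_⟩
  have hm : MeasurableSet {x : Fin d → ℝ | ∀ j, |x j| ≤ R} := by
    simp only [Set.ofPred_forall]
    exact MeasurableSet.iInter fun j =>
      measurableSet_le ((measurable_pi_apply j).abs) measurable_const
  exact (mem_ae_iff_prob_eq_one hm).2 h

theorem mconvPow_prop {d : ℕ} {θ : Measure (Fin d → ℝ)} [IsProbabilityMeasure θ]
    (h : ABdd θ id) (k : ℕ) : IsProbabilityMeasure (mconvPow θ k) ∧ ABdd (mconvPow θ k) id := by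
  induction k with
  | zero =>
    refine ⟨by unfold mconvPow; infer_instance, 0, ?_⟩
    have : ∀ᵐ x ∂(Measure.dirac (0 : Fin d → ℝ)), x = 0 := by
      rw [ae_dirac_eq]; rfl
    change ∀ᵐ x ∂(Measure.dirac (0 : Fin d → ℝ)), _
    filter_upwards [this] with x hx j
    simp [hx]
  | succ k ih =>
    obtain ⟨h1, h2⟩ := ih
    have madd : Measurable fun p : (Fin d → ℝ) × (Fin d → ℝ) => p.1 + p.2 :=
      measurable_fst.add measurable_snd
    refine ⟨Measure.isProbabilityMeasure_map madd.aemeasurable, ?_⟩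
    have c1 : ABdd ((mconvPow θ k).prod θ) (fun p => p.1) := by
      obtain ⟨R, h⟩ := h2
      exact ⟨R, (measurePreserving_fst (μ := mconvPow θ k)
        (ν := θ)).quasiMeasurePreserving.ae h⟩
    have c2 : ABdd ((mconvPow θ k).prod θ) (fun p => p.2) := by
      obtain ⟨R, h⟩ := h
      exact ⟨R, (measurePreserving_snd (μ := mconvPow θ k)
        (ν := θ)).quasiMeasurePreserving.ae h⟩
    obtain ⟨R, hR⟩ := c1.add c2
    refine ⟨R, ?_⟩
    change ∀ᵐ x ∂(Measure.map (fun p : (Fin d → ℝ) × (Fin d → ℝ) => p.1 + p.2)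
      ((mconvPow θ k).prod θ)), ∀ j, |x j| ≤ R
    have hm : MeasurableSet {x : Fin d → ℝ | ∀ j, |x j| ≤ R} := by
      simp only [Set.ofPred_forall]
      exact MeasurableSet.iInter fun j =>
        measurableSet_le ((measurable_pi_apply j).abs) measurable_const
    exact (ae_map_iff madd.aemeasurable hm).2 hR

/-- Discretized Kaimanovich–Vershik: for compactly supported probability measures
`θ, σ` on `ℝ^d`, `H(θ^{*k} * σ, 𝓔_n) − H(σ, 𝓔_n) ≤ k (H(θ*σ, 𝓔_n) − H(σ, 𝓔_n)) + O(k)`,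
the implicit constant depending only on `d` and `χ₁,…,χ_d`. -/
theorem stmt11 (d : ℕ) (hd : 1 ≤ d) (χ : Fin d → ℝ) (hχ : ∀ j, 0 < χ j) :
    ∃ K : ℝ, 0 < K ∧
      ∀ (n : ℕ) (θ σ : Measure (Fin d → ℝ)),
        IsProbabilityMeasure θ → IsProbabilityMeasure σ →
        (∃ R : ℝ, θ {x | ∀ j, |x j| ≤ R} = 1) →
        (∃ R : ℝ, σ {x | ∀ j, |x j| ≤ R} = 1) →
        ∀ k : ℕ, 1 ≤ k →
          entE d χ n (mconv (mconvPow θ k) σ) - entE d χ n σ ≤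
            (k : ℝ) * (entE d χ n (mconv θ σ) - entE d χ n σ) + K * k := by
  have hlog : 0 < Real.log 2 := Real.log_pos (by norm_num)
  have hL : 0 ≤ Real.log ((errSet d).card : ℝ) := Real.log_natCast_nonneg _
  refine ⟨3 * Real.log (errSet d).card / Real.log 2 + 1, by positivity, ?_⟩
  intro n θ σ hθ hσ bθ bσ k _
  have bθ' := ABdd_of_meas bθ
  have bσ' := ABdd_of_meas bσ
  induction k with
  | zero =>
    have : mconv (mconvPow θ 0) σ = σ := Measure.dirac_zero_conv σ
    rw [this]; simp
  | succ k ih =>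
    have ih' : entE d χ n (mconv (mconvPow θ k) σ) - entE d χ n σ ≤
        (k : ℝ) * (entE d χ n (mconv θ σ) - entE d χ n σ) +
          (3 * Real.log (errSet d).card / Real.log 2 + 1) * k := by
      rcases Nat.eq_zero_or_pos k with rfl | hk
      · have : mconv (mconvPow θ 0) σ = σ := Measure.dirac_zero_conv σ
        rw [this]; simp
      · exact ih hk
    obtain ⟨h1, h2⟩ := mconvPow_prop bθ' k
    have s := step χ n (mconvPow θ k) θ σ h2 bθ' bσ'
    change entE d χ n (mconv (mconv (mconvPow θ k) θ) σ) - _ ≤ _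
    push_cast
    linarith
end
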